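/- Strict domination implies transmissibility via separated coding (Remark 4.2). Let V = {Vⁿ} be a general source and W = {Wⁿ} a general channel. Suppose there exist a channel input X = {Xⁿ}, a real sequence {cₙ}, and a sequence {γₙ} with γₙ > 0, γₙ → 0, nγₙ → ∞, such that limₙ ( Pr{ (1/n) log( 1/P_{Vⁿ}(Vⁿ) ) ≥ cₙ } + Pr{ (1/n) log( Wⁿ(Yⁿ|Xⁿ)/P_{Yⁿ}(Yⁿ) ) ≤ cₙ + γₙ } ) = 0, where Yⁿ is the channel output due to input Xⁿ. Then V is transmissible over W. -/

import Mathlib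

open Filter Real Topology

namespace ISC

/-- Words of length `n` over alphabet `A`. -/
abbrev Word (A : Type*) (n : ℕ) : Type _ := Fin n → A

/-- `p` is a probability mass function. -/
def IsPMF {α : Type*} (p : α → ℝ) : Prop :=
  (∀ a, 0 ≤ p a) ∧ HasSum p 1

/-- Probability of the event `S` under the pmf `p`. -/
noncomputable def prob {α : Type*} (p : α → ℝ) (S : Set α) : ℝ :=
  ∑' a, S.indicator p a

/-- Output marginal `P_{Yⁿ}` of the channel `W` fed with the joint input law `P_{VⁿXⁿ}`. -/
noncomputable def outDist {𝒱 𝒳 𝒴 : Type*} {n : ℕ}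
    (PVX : Word 𝒱 n × Word 𝒳 n → ℝ) (W : Word 𝒳 n → Word 𝒴 n → ℝ)
    (y : Word 𝒴 n) : ℝ :=
  ∑' vx : Word 𝒱 n × Word 𝒳 n, PVX vx * W vx.2 y

/-- Joint law of `(Vⁿ, Xⁿ, Yⁿ)`: `P_{VⁿXⁿ}(v,x) · Wⁿ(y|x)`. -/
noncomputable def jointLaw {𝒱 𝒳 𝒴 : Type*} {n : ℕ}
    (PVX : Word 𝒱 n × Word 𝒳 n → ℝ) (W : Word 𝒳 n → Word 𝒴 n → ℝ) :
    Word 𝒱 n × Word 𝒳 n × Word 𝒴 n → ℝ :=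
  fun z => PVX (z.1, z.2.1) * W z.2.1 z.2.2

/-- The joint input law `P_{VⁿXⁿ}` induced by the deterministic encoder `φ`:
`P_{Vⁿ}(v) 1{x = φ(v)}`. -/
noncomputable def codeInput {𝒱 𝒳 : Type*} [DecidableEq 𝒳] {n : ℕ} (PV : Word 𝒱 n → ℝ)
    (φ : Word 𝒱 n → Word 𝒳 n) : Word 𝒱 n × Word 𝒳 n → ℝ :=
  fun vx => if vx.2 = φ vx.1 then PV vx.1 else 0

/-- Error probability `εₙ` of the joint source-channel code `(φ, ψ)`. -/
noncomputable def errProb {𝒱 𝒳 𝒴 : Type*} {n : ℕ}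
    (PV : Word 𝒱 n → ℝ) (W : Word 𝒳 n → Word 𝒴 n → ℝ)
    (φ : Word 𝒱 n → Word 𝒳 n) (ψ : Word 𝒴 n → Word 𝒱 n) : ℝ :=
  ∑' v, PV v * prob (W (φ v)) {y | ψ y ≠ v}

/-- `V` is transmissible over `W`. -/
def Transmissible {𝒱 𝒳 𝒴 : Type*} (PV : (n : ℕ) → Word 𝒱 n → ℝ)
    (W : (n : ℕ) → Word 𝒳 n → Word 𝒴 n → ℝ) : Prop :=
  ∃ (φ : (n : ℕ) → Word 𝒱 n → Word 𝒳 n) (ψ : (n : ℕ) → Word 𝒴 n → Word 𝒱 n),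
    Tendsto (fun n => errProb (PV n) (W n) (φ n) (ψ n)) atTop (nhds 0)

/-- Output marginal of the channel `W` for an input distribution `P_{Xⁿ}`. -/
noncomputable def outDistX {𝒳 𝒴 : Type*} {n : ℕ}
    (PX : Word 𝒳 n → ℝ) (W : Word 𝒳 n → Word 𝒴 n → ℝ) (y : Word 𝒴 n) : ℝ :=
  ∑' x : Word 𝒳 n, PX x * W x y

/-- Joint law of `(Xⁿ, Yⁿ)`: `P_{Xⁿ}(x) · Wⁿ(y|x)`. -/
noncomputable def jointXY {𝒳 𝒴 : Type*} {n : ℕ}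
    (PX : Word 𝒳 n → ℝ) (W : Word 𝒳 n → Word 𝒴 n → ℝ) :
    Word 𝒳 n × Word 𝒴 n → ℝ :=
  fun z => PX z.1 * W z.1 z.2

/-- Limit superior in probability of a sequence of random variables `Z i`
distributed according to the pmfs `p i`. -/
noncomputable def plimsup {α : ℕ → Type*} (p : (i : ℕ) → α i → ℝ)
    (Z : (i : ℕ) → α i → ℝ) : EReal :=
  sInf {β : EReal |
    Tendsto (fun i => prob (p i) {a | β < (Z i a : EReal)}) atTop (nhds 0)}

/-- Limit inferior in probability of a sequence of random variables `Z i`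
distributed according to the pmfs `p i`. -/
noncomputable def pliminf {α : ℕ → Type*} (p : (i : ℕ) → α i → ℝ)
    (Z : (i : ℕ) → α i → ℝ) : EReal :=
  sSup {β : EReal |
    Tendsto (fun i => prob (p i) {a | (Z i a : EReal) < β}) atTop (nhds 0)}

/-- Spectral sup-entropy rate `H̄(V)`. -/
noncomputable def Hbar {𝒱 : Type*} (PV : (n : ℕ) → Word 𝒱 n → ℝ) : EReal :=
  plimsup (fun n => PV n) (fun n v => (1 / (n : ℝ)) * Real.log (1 / PV n v))

/-- Spectral inf-entropy rate `H_(V)`. -/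
noncomputable def Hlow {𝒱 : Type*} (PV : (n : ℕ) → Word 𝒱 n → ℝ) : EReal :=
  pliminf (fun n => PV n) (fun n v => (1 / (n : ℝ)) * Real.log (1 / PV n v))

/-- Spectral inf-information rate `I_(X;Y)` of the channel `W` with input `X`. -/
noncomputable def Ilow {𝒳 𝒴 : Type*} (PX : (n : ℕ) → Word 𝒳 n → ℝ)
    (W : (n : ℕ) → Word 𝒳 n → Word 𝒴 n → ℝ) : EReal :=
  pliminf (fun n => jointXY (PX n) (W n))
    (fun n z => (1 / (n : ℝ)) * Real.log (W n z.1 z.2 / outDistX (PX n) (W n) z.2))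

/-- Spectral sup-information rate `Ī(X;Y)` of the channel `W` with input `X`. -/
noncomputable def Ihigh {𝒳 𝒴 : Type*} (PX : (n : ℕ) → Word 𝒳 n → ℝ)
    (W : (n : ℕ) → Word 𝒳 n → Word 𝒴 n → ℝ) : EReal :=
  plimsup (fun n => jointXY (PX n) (W n))
    (fun n z => (1 / (n : ℝ)) * Real.log (W n z.1 z.2 / outDistX (PX n) (W n) z.2))

/-- `sup_X I_(X;Y)`: the supremum over all channel inputs. -/
noncomputable def supIlow {𝒳 𝒴 : Type*}
    (W : (n : ℕ) → Word 𝒳 n → Word 𝒴 n → ℝ) : EReal :=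
  ⨆ PX : {PX : (n : ℕ) → Word 𝒳 n → ℝ // ∀ n, IsPMF (PX n)}, Ilow PX.1 W

/-!
Source and channel are coded separately. The words of probability at least `exp (-n cₙ)` number at
most `exp (n cₙ)`, and the source code enumerates them. Feinstein's greedy construction supplies the
channel code: let `T x` be the set of outputs `y` with `exp (n (cₙ + γₙ)) * P_{Yⁿ}(y) ≤ Wⁿ(y|x)`,
which has output probability at most `exp (-n (cₙ + γₙ))`. Averaging over the input law shows that
whatever set `U` of outputs is already claimed, some codeword `x` has `T x \ U` as a decoding region
with error at most `Pr{Yⁿ ∉ T Xⁿ} + P_{Yⁿ}(U)`. For the first `exp (n cₙ)` codewords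
`P_{Yⁿ}(U) ≤ exp (n cₙ) * exp (-n (cₙ + γₙ)) = exp (-n γₙ)`, which tends to `0`.
-/

section Pmf

variable {α : Type*} {p : α → ℝ}

lemma IsPMF.hasSum_prob (hp : IsPMF p) (S : Set α) : HasSum (S.indicator p) (prob p S) :=
  (hp.2.summable.indicator S).hasSum

lemma IsPMF.prob_nonneg (hp : IsPMF p) (S : Set α) : 0 ≤ prob p S :=
  tsum_nonneg fun a => Set.indicator_nonneg (fun a _ => hp.1 a) a

lemma IsPMF.prob_mono_of_pos (hp : IsPMF p) {S T : Set α} (h : ∀ a ∈ S, 0 < p a → a ∈ T) :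
    prob p S ≤ prob p T := by
  refine hasSum_le (fun a => ?_) (hp.hasSum_prob S) (hp.hasSum_prob T)
  refine Set.indicator_apply_le' (fun ha => ?_) fun _ => Set.indicator_nonneg (fun a _ => hp.1 a) a
  rcases (hp.1 a).eq_or_lt with h0 | hpos
  · exact h0 ▸ Set.indicator_nonneg (fun a _ => hp.1 a) a
  · exact (Set.indicator_of_mem (h a ha hpos) p).ge

lemma IsPMF.prob_mono (hp : IsPMF p) {S T : Set α} (h : S ⊆ T) : prob p S ≤ prob p T :=
  hp.prob_mono_of_pos fun _ ha _ => h ha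

lemma IsPMF.prob_le_one (hp : IsPMF p) (S : Set α) : prob p S ≤ 1 :=
  hasSum_le (Set.indicator_le_self' fun a _ => hp.1 a) (hp.hasSum_prob S) hp.2

lemma IsPMF.prob_union_le (hp : IsPMF p) (S T : Set α) :
    prob p (S ∪ T) ≤ prob p S + prob p T := by
  refine hasSum_le (fun a => ?_) (hp.hasSum_prob _) ((hp.hasSum_prob S).add (hp.hasSum_prob T))
  rw [← Set.indicator_union_add_inter_apply]
  exact le_add_of_nonneg_right (Set.indicator_nonneg (fun a _ => hp.1 a) a)

lemma IsPMF.nonempty (hp : IsPMF p) : Nonempty α := by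
  by_contra h
  rw [not_nonempty_iff] at h
  exact zero_ne_one (hasSum_empty.unique hp.2)

lemma IsPMF.exists_le_of_hasSum (hp : IsPMF p) {f : α → ℝ} {m : ℝ}
    (hf : HasSum (fun a => p a * f a) m) : ∃ a, f a ≤ m := by
  by_contra! h
  obtain ⟨a, ha⟩ : ∃ a, p a ≠ 0 := by
    by_contra! hzero
    exact zero_ne_one (hasSum_zero.unique (funext hzero ▸ hp.2 : HasSum (fun _ => (0 : ℝ)) 1))
  have hconst : HasSum (fun a => p a * m) m := by simpa only [one_mul] using hp.2.mul_right m
  exact (hasSum_lt (fun b => mul_le_mul_of_nonneg_left (h b).le (hp.1 b))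
    (mul_lt_mul_of_pos_left (h a) ((hp.1 a).lt_of_ne' ha)) hconst hf).false

lemma IsPMF.finite_setOf_le (hp : IsPMF p) {ε : ℝ} (hε : 0 < ε) : {a | ε ≤ p a}.Finite := by
  simpa only [eventually_cofinite, not_lt] using
    hp.2.summable.tendsto_cofinite_zero.eventually (gt_mem_nhds hε)

lemma IsPMF.card_le_inv (hp : IsPMF p) {ε : ℝ} (hε : 0 < ε) {s : Finset α}
    (hs : ∀ a ∈ s, ε ≤ p a) : (s.card : ℝ) ≤ ε⁻¹ := by
  have hmass : (s.card : ℝ) * ε ≤ 1 := by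
    simpa only [nsmul_eq_mul] using
      (Finset.card_nsmul_le_sum s p ε hs).trans (sum_le_hasSum s (fun a _ => hp.1 a) hp.2)
  rwa [← one_div, le_div_iff₀ hε]

lemma IsPMF.prob_setOf_mul_le {q : α → ℝ} (hq : IsPMF q) (hp : IsPMF p) {κ : ℝ} (hκ : 0 < κ) :
    prob q {a | κ * q a ≤ p a} ≤ κ⁻¹ := by
  have hscaled : κ * prob q {a | κ * q a ≤ p a} ≤ prob p {a | κ * q a ≤ p a} := by
    refine hasSum_le (fun a => ?_) ((hq.hasSum_prob _).mul_left κ) (hp.hasSum_prob _)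
    by_cases ha : κ * q a ≤ p a <;> simp [ha]
  rw [← one_div, le_div_iff₀' hκ]
  exact hscaled.trans (hp.prob_le_one _)

end Pmf

section Marginal

variable {α β : Type*}

/-- The marginal on the second factor of a mass function on a product. -/
noncomputable def sndMarginal (r : α × β → ℝ) (b : β) : ℝ :=
  ∑' a, r (a, b)

lemma IsPMF.hasSum_sndMarginal {r : α × β → ℝ} (hr : IsPMF r) (b : β) :
    HasSum (fun a => r (a, b)) (sndMarginal r b) :=
  (((Equiv.prodComm β α).summable_iff.2 hr.2.summable).prod_factor b).hasSum

protected lemma IsPMF.sndMarginal {r : α × β → ℝ} (hr : IsPMF r) : IsPMF (sndMarginal r) :=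
  ⟨fun b => tsum_nonneg fun a => hr.1 (a, b),
    ((Equiv.prodComm β α).hasSum_iff.2 hr.2).prod_fiberwise hr.hasSum_sndMarginal⟩

lemma IsPMF.prob_sndMarginal {r : α × β → ℝ} (hr : IsPMF r) (S : Set β) :
    prob (sndMarginal r) S = prob r (Prod.snd ⁻¹' S) := by
  have hfiber (b : β) :
      HasSum (fun a => (Prod.snd ⁻¹' S).indicator r (a, b))
        (S.indicator (sndMarginal r) b) := by
    by_cases hb : b ∈ S
    · simpa [Set.indicator, hb] using hr.hasSum_sndMarginal b
    · simp [Set.indicator, hb, hasSum_zero]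
  exact (hr.sndMarginal.hasSum_prob S).unique
    (((Equiv.prodComm β α).hasSum_iff.2 (hr.hasSum_prob _)).prod_fiberwise hfiber)

end Marginal

section Channel

variable {ι β : Type*} {p : ι → ℝ} {w : ι → β → ℝ}

/-- The joint law of the input and the output of a channel `w` with input law `p`: `jointXY` on
arbitrary types. -/
def joint (p : ι → ℝ) (w : ι → β → ℝ) : ι × β → ℝ :=
  fun z => p z.1 * w z.1 z.2

protected lemma IsPMF.joint (hp : IsPMF p) (hw : ∀ i, IsPMF (w i)) : IsPMF (joint p w) := by
  have hnonneg : 0 ≤ joint p w := fun z => mul_nonneg (hp.1 z.1) ((hw z.1).1 z.2)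
  have hfiber (i : ι) : HasSum (fun y => joint p w (i, y)) (p i) := by
    simpa only [joint, mul_one] using (hw i).2.mul_left (p i)
  have hsummable : Summable (joint p w) := by
    refine (summable_prod_of_nonneg hnonneg).2 ⟨fun i => (hfiber i).summable, ?_⟩
    simpa only [(hfiber _).tsum_eq] using hp.2.summable
  exact ⟨hnonneg, (hsummable.hasSum.prod_fiberwise hfiber).unique hp.2 ▸ hsummable.hasSum⟩

lemma IsPMF.hasSum_prob_joint (hp : IsPMF p) (hw : ∀ i, IsPMF (w i)) (S : Set (ι × β)) :
    HasSum (fun i => p i * prob (w i) {y | (i, y) ∈ S}) (prob (joint p w) S) := by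
  refine ((hp.joint hw).hasSum_prob S).prod_fiberwise fun i => ?_
  have hfiber : (fun y => S.indicator (joint p w) (i, y)) =
      fun y => p i * {y | (i, y) ∈ S}.indicator (w i) y := by
    funext y
    simp [Set.indicator, joint]
  exact hfiber ▸ ((hw i).hasSum_prob _).mul_left (p i)

lemma IsPMF.prob_joint_le (hp : IsPMF p) (hw : ∀ i, IsPMF (w i)) {S : Set (ι × β)} {A : Set ι}
    {η : ℝ} (hη : 0 ≤ η) (h : ∀ i ∉ A, prob (w i) {y | (i, y) ∈ S} ≤ η) :
    prob (joint p w) S ≤ prob p A + η := by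
  have hbound (i : ι) : p i * prob (w i) {y | (i, y) ∈ S} ≤ A.indicator p i + p i * η := by
    by_cases hi : i ∈ A
    · rw [Set.indicator_of_mem hi]
      exact (mul_le_of_le_one_right (hp.1 i) ((hw i).prob_le_one _)).trans
        (le_add_of_nonneg_right (mul_nonneg (hp.1 i) hη))
    · rw [Set.indicator_of_notMem hi, zero_add]
      exact mul_le_mul_of_nonneg_left (h i hi) (hp.1 i)
  simpa only [one_mul] using
    hasSum_le hbound (hp.hasSum_prob_joint hw S) ((hp.hasSum_prob A).add (hp.2.mul_right η))

end Channel

section Feinstein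

variable {ι β : Type*} {p : ι → ℝ} {w : ι → β → ℝ}

lemma exists_prob_compl_sdiff_le (hp : IsPMF p) (hw : ∀ i, IsPMF (w i)) (T : ι → Set β)
    (U : Set β) :
    ∃ i, prob (w i) (T i \ U)ᶜ ≤
      prob (joint p w) {z | z.2 ∉ T z.1} + prob (sndMarginal (joint p w)) U := by
  have hmean := (hp.hasSum_prob_joint hw {z | z.2 ∉ T z.1}).add
    (hp.hasSum_prob_joint hw (Prod.snd ⁻¹' U))
  simp only [← mul_add] at hmean
  rw [← (hp.joint hw).prob_sndMarginal] at hmean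
  obtain ⟨i, hi⟩ := hp.exists_le_of_hasSum hmean
  have hcover : (T i \ U)ᶜ ⊆ (T i)ᶜ ∪ U := by rw [Set.compl_sdiff, Set.union_comm]
  exact ⟨i, ((hw i).prob_mono hcover).trans (((hw i).prob_union_le _ _).trans hi)⟩

lemma exists_eq_of_mem_of_pairwise_disjoint {κ : Type*} [Nonempty κ] {D : κ → Set β}
    (hD : Pairwise (Function.onFun Disjoint D)) : ∃ g : β → κ, ∀ k, ∀ y ∈ D k, g y = k := by
  have hunique (y : β) : ∃ j, ∀ k, y ∈ D k → j = k := by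
    by_cases hy : ∃ j, y ∈ D j
    · obtain ⟨j, hj⟩ := hy
      exact ⟨j, fun k hk => hD.eq (Set.not_disjoint_iff.2 ⟨y, hj, hk⟩)⟩
    · exact ⟨Classical.arbitrary κ, fun k hk => absurd ⟨k, hk⟩ hy⟩
  choose g hg using hunique
  exact ⟨g, fun k y => hg y k⟩

/-- The set of outputs claimed by the first `k` codewords of Feinstein's greedy construction:
`next U` is the codeword chosen when `U` is already claimed, and a codeword `i` claims `T i`. -/
def claimed (T : ι → Set β) (next : Set β → ι) : ℕ → Set β
  | 0 => ∅
  | k + 1 => claimed T next k ∪ T (next (claimed T next k))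

lemma monotone_claimed (T : ι → Set β) (next : Set β → ι) : Monotone (claimed T next) :=
  monotone_nat_of_le_succ fun _ => Set.subset_union_left

lemma pairwise_disjoint_sdiff_claimed (T : ι → Set β) (next : Set β → ι) :
    Pairwise (Function.onFun Disjoint fun k =>
      T (next (claimed T next k)) \ claimed T next k) := by
  refine (pairwise_disjoint_on _).2 fun j k hjk => ?_
  have hclaimed : T (next (claimed T next j)) \ claimed T next j ⊆ claimed T next k :=
    Set.sdiff_subset.trans (Set.subset_union_right.trans (monotone_claimed T next hjk))
  exact Set.disjoint_sdiff_right.mono_left hclaimed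

lemma IsPMF.prob_claimed_le {q : β → ℝ} (hq : IsPMF q) {T : ι → Set β} {δ : ℝ}
    (hT : ∀ i, prob q (T i) ≤ δ) (next : Set β → ι) (k : ℕ) :
    prob q (claimed T next k) ≤ k * δ := by
  induction k with
  | zero => simp [claimed, prob]
  | succ k ih =>
    calc prob q (claimed T next (k + 1))
        ≤ prob q (claimed T next k) + prob q (T (next (claimed T next k))) := hq.prob_union_le _ _
      _ ≤ k * δ + δ := add_le_add ih (hT _)
      _ = (k + 1 : ℕ) * δ := by push_cast; ring

theorem exists_channel_code_prob_ne_le (hp : IsPMF p) (hw : ∀ i, IsPMF (w i)) {T : ι → Set β}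
    {δ : ℝ} (hT : ∀ i, prob (sndMarginal (joint p w)) (T i) ≤ δ) :
    ∃ (f : ℕ → ι) (g : β → ℕ), ∀ k,
      prob (w (f k)) {y | g y ≠ k} ≤ prob (joint p w) {z | z.2 ∉ T z.1} + k * δ := by
  choose next hnext using exists_prob_compl_sdiff_le hp hw T
  obtain ⟨g, hg⟩ :=
    exists_eq_of_mem_of_pairwise_disjoint (pairwise_disjoint_sdiff_claimed T next)
  refine ⟨fun k => next (claimed T next k), g, fun k => ?_⟩
  calc prob (w (next (claimed T next k))) {y | g y ≠ k}
      ≤ prob (w (next (claimed T next k))) (T (next (claimed T next k)) \ claimed T next k)ᶜ :=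
        (hw _).prob_mono fun y hy hmem => hy (hg k y hmem)
    _ ≤ prob (joint p w) {z | z.2 ∉ T z.1} +
          prob (sndMarginal (joint p w)) (claimed T next k) := hnext _
    _ ≤ prob (joint p w) {z | z.2 ∉ T z.1} + k * δ := by
        gcongr
        exact (hp.joint hw).sndMarginal.prob_claimed_le hT next k

end Feinstein

section OneShot

variable {α ι β : Type*} {p : α → ℝ} {q : ι → ℝ} {w : ι → β → ℝ}

lemma exists_enumeration [Nonempty α] (s : Finset α) :
    ∃ (e : α → ℕ) (d : ℕ → α), ∀ a ∈ s, e a < s.card ∧ d (e a) = a := by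
  classical
  refine ⟨s.toList.idxOf, fun k => s.toList.getD k (Classical.arbitrary α), fun a ha => ?_⟩
  have hlt : s.toList.idxOf a < s.toList.length := List.idxOf_lt_length_of_mem (s.mem_toList.2 ha)
  exact ⟨s.length_toList ▸ hlt, (List.getD_eq_getElem _ _ hlt).trans (List.getElem_idxOf hlt)⟩

lemma exists_separated_code (hp : IsPMF p) (hw : ∀ i, IsPMF (w i)) (s : Finset α) {η : ℝ}
    (hη : 0 ≤ η) {f : ℕ → ι} {g : β → ℕ} (hfg : ∀ k < s.card, prob (w (f k)) {y | g y ≠ k} ≤ η) :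
    ∃ (φ : α → ι) (ψ : β → α),
      prob (joint p (w ∘ φ)) {z | ψ z.2 ≠ z.1} ≤ prob p (↑s)ᶜ + η := by
  have := hp.nonempty
  obtain ⟨e, d, hed⟩ := exists_enumeration s
  refine ⟨f ∘ e, d ∘ g, hp.prob_joint_le (fun _ => hw _) hη fun a ha => ?_⟩
  obtain ⟨hlt, hdec⟩ := hed a (not_not.1 ha)
  have herror : {y | d (g y) ≠ a} ⊆ {y | g y ≠ e a} := fun y hy hgy => hy (hgy ▸ hdec)
  exact ((hw _).prob_mono herror).trans (hfg _ hlt)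

-- Points of mass zero are discarded: there `log (1 / 0) = 0` says nothing about the mass.
lemma prob_lt_exp_neg_le_prob_le_log_inv (hp : IsPMF p) (a : ℝ) :
    prob p {v | p v < rexp (-a)} ≤ prob p {v | a ≤ Real.log (1 / p v)} := by
  refine hp.prob_mono_of_pos fun v hv hpos => ?_
  rw [Set.mem_ofPred_eq, one_div, Real.log_inv, le_neg, Real.log_le_iff_le_exp hpos]
  exact le_of_lt hv

lemma prob_lt_exp_mul_le_prob_log_div_le (hq : IsPMF q) (hw : ∀ i, IsPMF (w i)) (r : β → ℝ)
    (b : ℝ) :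
    prob (joint q w) {z | w z.1 z.2 < rexp b * r z.2} ≤
      prob (joint q w) {z | Real.log (w z.1 z.2 / r z.2) ≤ b} := by
  refine (hq.joint hw).prob_mono_of_pos fun z hz hpos => ?_
  have hw_pos : 0 < w z.1 z.2 := pos_of_mul_pos_right hpos (hq.1 z.1)
  have hlt : w z.1 z.2 < rexp b * r z.2 := hz
  have hr_pos : 0 < r z.2 := pos_of_mul_pos_right (hw_pos.trans hlt) (exp_pos b).le
  rw [Set.mem_ofPred_eq, Real.log_le_iff_le_exp (div_pos hw_pos hr_pos), div_le_iff₀ hr_pos]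
  exact hlt.le

theorem exists_code_prob_error_le (hp : IsPMF p) (hq : IsPMF q) (hw : ∀ i, IsPMF (w i))
    (a b : ℝ) :
    ∃ (φ : α → ι) (ψ : β → α), prob (joint p (w ∘ φ)) {z | ψ z.2 ≠ z.1} ≤
      prob p {v | a ≤ Real.log (1 / p v)} +
        prob (joint q w) {z | Real.log (w z.1 z.2 / sndMarginal (joint q w) z.2) ≤ b} +
        rexp (a - b) := by
  set r := sndMarginal (joint q w)
  have hfinite := hp.finite_setOf_le (exp_pos (-a))
  have hcard : (hfinite.toFinset.card : ℝ) ≤ rexp a := by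
    simpa only [exp_neg, inv_inv] using
      hp.card_le_inv (exp_pos (-a)) fun v hv => hfinite.mem_toFinset.1 hv
  obtain ⟨f, g, hfg⟩ := exists_channel_code_prob_ne_le hq hw
    (T := fun i => {y | rexp b * r y ≤ w i y}) fun i =>
      (hq.joint hw).sndMarginal.prob_setOf_mul_le (hw i) (exp_pos b)
  have hchannel (k : ℕ) (hk : k < hfinite.toFinset.card) : prob (w (f k)) {y | g y ≠ k} ≤
      prob (joint q w) {z | Real.log (w z.1 z.2 / r z.2) ≤ b} + rexp (a - b) := by
    refine (hfg k).trans (add_le_add ?_ ?_)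
    · simpa only [Set.mem_ofPred_eq, not_le] using
        prob_lt_exp_mul_le_prob_log_div_le hq hw r b
    · rw [exp_sub, div_eq_mul_inv]
      gcongr
      exact (Nat.cast_le.2 hk.le).trans hcard
  obtain ⟨φ, ψ, hφψ⟩ := exists_separated_code hp hw hfinite.toFinset
    (add_nonneg ((hq.joint hw).prob_nonneg _) (exp_pos _).le) hchannel
  refine ⟨φ, ψ, hφψ.trans ?_⟩
  rw [add_assoc]
  gcongr
  simpa only [hfinite.coe_toFinset, Set.compl_ofPred, not_le] using
    prob_lt_exp_neg_le_prob_le_log_inv hp a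

end OneShot

section Words

variable {𝒱 𝒳 𝒴 : Type*} {n : ℕ}

lemma errProb_eq_prob_joint {PV : Word 𝒱 n → ℝ} (hPV : IsPMF PV) {W : Word 𝒳 n → Word 𝒴 n → ℝ}
    (hW : ∀ x, IsPMF (W x)) (φ : Word 𝒱 n → Word 𝒳 n) (ψ : Word 𝒴 n → Word 𝒱 n) :
    errProb PV W φ ψ = prob (joint PV (W ∘ φ)) {z | ψ z.2 ≠ z.1} :=
  (hPV.hasSum_prob_joint (fun v => hW (φ v)) {z | ψ z.2 ≠ z.1}).tsum_eq

lemma jointXY_sndMarginal (PVX : Word 𝒱 n × Word 𝒳 n → ℝ) (W : Word 𝒳 n → Word 𝒴 n → ℝ) :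
    jointXY (sndMarginal PVX) W = sndMarginal (jointLaw PVX W) :=
  funext fun _ => tsum_mul_right.symm

protected lemma IsPMF.jointLaw {PVX : Word 𝒱 n × Word 𝒳 n → ℝ} (hPVX : IsPMF PVX)
    {W : Word 𝒳 n → Word 𝒴 n → ℝ} (hW : ∀ x, IsPMF (W x)) : IsPMF (jointLaw PVX W) :=
  have h := hPVX.joint fun vx => hW vx.2
  ⟨fun _ => h.1 (_, _), (Equiv.prodAssoc _ _ _).symm.hasSum_iff.2 h.2⟩

lemma prob_jointXY_sndMarginal {PVX : Word 𝒱 n × Word 𝒳 n → ℝ} (hPVX : IsPMF PVX)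
    {W : Word 𝒳 n → Word 𝒴 n → ℝ} (hW : ∀ x, IsPMF (W x)) (S : Set (Word 𝒳 n × Word 𝒴 n)) :
    prob (jointXY (sndMarginal PVX) W) S = prob (jointLaw PVX W) (Prod.snd ⁻¹' S) := by
  rw [jointXY_sndMarginal, (hPVX.jointLaw hW).prob_sndMarginal]

lemma outDistX_sndMarginal {PVX : Word 𝒱 n × Word 𝒳 n → ℝ} (hPVX : IsPMF PVX)
    {W : Word 𝒳 n → Word 𝒴 n → ℝ} (hW : ∀ x, IsPMF (W x)) :
    outDistX (sndMarginal PVX) W = outDist PVX W := by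
  funext y
  have hsum : HasSum (fun vx : Word 𝒱 n × Word 𝒳 n => PVX vx * W vx.2 y) (outDist PVX W y) :=
    (hPVX.joint fun vx => hW vx.2).hasSum_sndMarginal y
  exact (((Equiv.prodComm _ _).hasSum_iff.2 hsum).prod_fiberwise fun x =>
    (hPVX.hasSum_sndMarginal x).mul_right (W x y)).tsum_eq

end Words

theorem strict_domination_implies_transmissibility_general
    {𝒱 𝒳 𝒴 : Type*} {PV : (n : ℕ) → Word 𝒱 n → ℝ} (hPV : ∀ n, IsPMF (PV n))
    {W : (n : ℕ) → Word 𝒳 n → Word 𝒴 n → ℝ} (hW : ∀ n x, IsPMF (W n x))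
    {PX : (n : ℕ) → Word 𝒳 n → ℝ} (hPX : ∀ n, IsPMF (PX n)) {c γ : ℕ → ℝ}
    (hnγ : Tendsto (fun n : ℕ => (n : ℝ) * γ n) atTop atTop)
    (hdom : Tendsto (fun n =>
        prob (PV n) {v | c n ≤ (1 / (n : ℝ)) * Real.log (1 / PV n v)} +
        prob (jointXY (PX n) (W n))
          {z | (1 / (n : ℝ)) * Real.log (W n z.1 z.2 / outDistX (PX n) (W n) z.2) ≤
            c n + γ n}) atTop (nhds 0)) :
    Transmissible PV W := by
  choose φ ψ hφψ using fun n => exists_code_prob_error_le (hPV n) (hPX n) (hW n)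
    (n * c n) (n * (c n + γ n))
  have hlim := hdom.add (tendsto_exp_neg_atTop_nhds_zero.comp hnγ)
  rw [add_zero] at hlim
  refine ⟨φ, ψ, tendsto_of_tendsto_of_tendsto_of_le_of_le' tendsto_const_nhds hlim ?_ ?_⟩
  · refine .of_forall fun n => ?_
    rw [errProb_eq_prob_joint (hPV n) (hW n)]
    exact ((hPV n).joint fun _ => hW n _).prob_nonneg _
  · filter_upwards [eventually_gt_atTop 0] with n hn
    have hn_pos : (0 : ℝ) < n := Nat.cast_pos.2 hn
    have hexponent : n * c n - n * (c n + γ n) = -(n * γ n) := by ring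
    simp only [one_div (n : ℝ), le_inv_mul_iff₀ hn_pos, inv_mul_le_iff₀ hn_pos,
      errProb_eq_prob_joint (hPV n) (hW n), Function.comp_apply, ← hexponent]
    exact hφψ n

/-- **Strict domination implies transmissibility via separated coding** (Remark 4.2). -/
theorem strict_domination_implies_transmissibility
    {𝒱 𝒳 𝒴 : Type} [Countable 𝒱] [Countable 𝒳] [Countable 𝒴]
    (PV : (n : ℕ) → Word 𝒱 n → ℝ) (hPV : ∀ n, IsPMF (PV n))
    (W : (n : ℕ) → Word 𝒳 n → Word 𝒴 n → ℝ) (hW : ∀ n x, IsPMF (W n x))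
    (PVX : (n : ℕ) → Word 𝒱 n × Word 𝒳 n → ℝ) (hPVX : ∀ n, IsPMF (PVX n))
    (hmarg : ∀ n v, (∑' x : Word 𝒳 n, PVX n (v, x)) = PV n v)
    (c : ℕ → ℝ)
    (γ : ℕ → ℝ) (hγpos : ∀ n, 0 < γ n)
    (hγ0 : Tendsto γ atTop (nhds 0))
    (hnγ : Tendsto (fun n : ℕ => (n : ℝ) * γ n) atTop atTop)
    (hdom : Tendsto (fun n =>
        prob (PV n) {v : Word 𝒱 n | c n ≤ (1 / (n : ℝ)) * Real.log (1 / PV n v)} +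
        prob (jointLaw (PVX n) (W n))
          {z : Word 𝒱 n × Word 𝒳 n × Word 𝒴 n |
            (1 / (n : ℝ)) * Real.log (W n z.2.1 z.2.2 / outDist (PVX n) (W n) z.2.2) ≤
              c n + γ n}) atTop (nhds 0)) :
    Transmissible PV W := by
  refine strict_domination_implies_transmissibility_general (c := c) hPV hW
    (fun n => (hPVX n).sndMarginal) hnγ ?_
  simpa only [prob_jointXY_sndMarginal (hPVX _) (hW _), outDistX_sndMarginal (hPVX _) (hW _),
    Set.preimage_ofPred_eq] using hdom

end ISC
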